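/- There exists θ₀ ∈ (0,1) such that for every θ ∈ (0, θ₀) there exist a C^∞ function φ: ℝ → ℝ, a real number α ∈ (1,2), and a constant c ∈ (0,1) with the following properties: (i) φ(0) = 0, φ′(0) = 0, φ″(0) = 1, and φ′(t)/t → 1 as t → 0⁺; (ii) φ(t) > 0 and φ′(t) > 0 for every t > 0, the function t ↦ φ′(t)/t is strictly decreasing on (0,∞), and lim_{t→+∞} φ′(t)/t < θ; (iii) φ(t) = c·t^α for every t > 0 such that θ ≤ φ′(t)/t ≤ 1 − θ. -/

import Mathlib

open Set Filter Topology

lemma aux_prim {f : ℝ → ℝ} (hf : ContDiff ℝ (⊤ : ℕ∞) f) :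
    (∀ t, HasDerivAt (fun t => ∫ s in (0:ℝ)..t, f s) (f t) t) ∧
      ContDiff ℝ (⊤ : ℕ∞) (fun t => ∫ s in (0:ℝ)..t, f s) := by
  have h : ∀ t, HasDerivAt (fun t => ∫ s in (0:ℝ)..t, f s) (f t) t := fun t =>
    (hf.continuous.integral_hasStrictDerivAt 0 t).hasDerivAt
  refine ⟨h, ?_⟩
  rw [contDiff_infty_iff_deriv]
  refine ⟨fun t => (h t).differentiableAt, ?_⟩
  have : deriv (fun t => ∫ s in (0:ℝ)..t, f s) = f := funext fun t => (h t).deriv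
  rw [this]; exact hf

/-- cutoff -/
noncomputable def auxChi (s : ℝ) : ℝ := Real.smoothTransition (2 * s - 1)

lemma auxChi_smooth : ContDiff ℝ (⊤ : ℕ∞) auxChi := by
  unfold auxChi
  exact Real.smoothTransition.contDiff.comp (by fun_prop)

lemma auxChi_zero {s : ℝ} (h : s ≤ 1/2) : auxChi s = 0 :=
  Real.smoothTransition.zero_of_nonpos (by linarith)
lemma auxChi_one {s : ℝ} (h : 1 ≤ s) : auxChi s = 1 :=
  Real.smoothTransition.one_of_one_le (by linarith)
lemma auxChi_nonneg (s : ℝ) : 0 ≤ auxChi s := Real.smoothTransition.nonneg _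
lemma auxChi_le_one (s : ℝ) : auxChi s ≤ 1 := Real.smoothTransition.le_one _
lemma auxChi_pos {s : ℝ} (h : 1/2 < s) : 0 < auxChi s :=
  Real.smoothTransition.pos_of_pos (by linarith)

/-- minus the derivative of the quotient, up to a constant -/
noncomputable def auxH (p r s : ℝ) : ℝ := auxChi s * s ^ (-p - 1) + r * (1 - auxChi s)

lemma auxH_smooth (p r : ℝ) : ContDiff ℝ (⊤ : ℕ∞) (auxH p r) := by
  have h1 : ContDiff ℝ (⊤ : ℕ∞) (fun s => auxChi s * s ^ (-p - 1)) := by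
    rw [contDiff_iff_contDiffAt]
    intro s
    by_cases hs : s < 1/2
    · have : (fun s => auxChi s * s ^ (-p - 1)) =ᶠ[𝓝 s] fun _ => (0:ℝ) := by
        filter_upwards [Iio_mem_nhds hs] with x hx
        rw [auxChi_zero (le_of_lt hx), zero_mul]
      exact contDiffAt_const.congr_of_eventuallyEq this
    · exact auxChi_smooth.contDiffAt.mul
        (Real.contDiffAt_rpow_const_of_ne (by intro h; rw [h] at hs; norm_num at hs))
  exact h1.add (contDiff_const.mul (contDiff_const.sub auxChi_smooth))

lemma auxH_pos {p r s : ℝ} (hr : 0 < r) (hs : 0 < s) : 0 < auxH p r s := by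
  unfold auxH
  have h1 : 0 < s ^ (-p - 1) := Real.rpow_pos_of_pos hs _
  have h2 := auxChi_nonneg s
  have h3 := auxChi_le_one s
  rcases le_or_gt s (1/2) with h | h
  · rw [auxChi_zero h]; simpa using hr
  · have := mul_pos (auxChi_pos h) h1
    have := mul_nonneg hr.le (sub_nonneg.2 h3)
    linarith

lemma auxJ_pos : 0 < ∫ s in (0:ℝ)..1, s ^ 2 * (1 - auxChi s) := by
  have hc := auxChi_smooth.continuous
  apply intervalIntegral.intervalIntegral_pos_of_pos_on
  · exact (by fun_prop : Continuous fun s : ℝ => s ^ 2 * (1 - auxChi s)).intervalIntegrable _ _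
  · intro x hx
    have : auxChi x < 1 := Real.smoothTransition.lt_one_of_lt_one (by linarith [hx.2])
    have := hx.1
    apply mul_pos (by positivity) (by linarith)
  · norm_num

lemma aux_core (p : ℝ) (hp0 : 0 < p) (hp1 : p < 1) :
    ∃ r : ℝ, 0 < r ∧ (∫ s in (0:ℝ)..1, s ^ 2 * auxH p r s) = 1 / (2 - p) ∧
      (∫ s in (0:ℝ)..1, auxH p r s) ≤ 4 + 1 / ∫ s in (0:ℝ)..1, s ^ 2 * (1 - auxChi s) := by
  have hc := auxChi_smooth.continuous
  have hJ := auxJ_pos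
  set J := ∫ s in (0:ℝ)..1, s ^ 2 * (1 - auxChi s) with hJd
  have hrp : Continuous fun s : ℝ => s ^ (1 - p) :=
    Real.continuous_rpow_const (by linarith)
  have hcI : Continuous fun s : ℝ => s ^ (1 - p) * (1 - auxChi s) := by fun_prop
  set I := ∫ s in (0:ℝ)..1, s ^ (1 - p) * (1 - auxChi s) with hI
  have hIpos : 0 < I := by
    apply intervalIntegral.intervalIntegral_pos_of_pos_on
    · exact hcI.intervalIntegrable _ _
    · intro x hx
      have : auxChi x < 1 := Real.smoothTransition.lt_one_of_lt_one (by linarith [hx.2])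
      exact mul_pos (Real.rpow_pos_of_pos hx.1 _) (by linarith)
    · norm_num
  have hI1 : I ≤ 1 := by
    have : I ≤ ∫ s in (0:ℝ)..1, (1:ℝ) := by
      apply intervalIntegral.integral_mono_on (by norm_num) (hcI.intervalIntegrable _ _)
        (by simp)
      intro x hx
      have h1 : x ^ (1 - p) ≤ 1 := Real.rpow_le_one hx.1 hx.2 (by linarith)
      have h2 : 0 ≤ x ^ (1 - p) := Real.rpow_nonneg hx.1 _
      have := auxChi_nonneg x
      have := auxChi_le_one x
      nlinarith
    simpa using this
  refine ⟨I / J, by positivity, ?_, ?_⟩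
  · have e : (∫ s in (0:ℝ)..1, s ^ 2 * auxH p (I / J) s) =
        ∫ s in (0:ℝ)..1, (s ^ (1 - p) - s ^ (1 - p) * (1 - auxChi s))
          + (I / J) * (s ^ 2 * (1 - auxChi s)) := by
      apply intervalIntegral.integral_congr_uIoo
      intro s hs
      rw [uIoo_of_le (by norm_num)] at hs
      have : s ^ (1 - p) = s ^ 2 * s ^ (-p - 1) := by
        rw [← Real.rpow_natCast s 2, ← Real.rpow_add hs.1]; congr 1; push_cast; ring
      simp only [auxH, this]; ring
    rw [e, intervalIntegral.integral_add, intervalIntegral.integral_sub,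
      intervalIntegral.integral_const_mul, ← hJd, ← hI, integral_rpow (Or.inl (by linarith))]
    · rw [Real.zero_rpow (by linarith), Real.one_rpow]
      field_simp
      ring
    all_goals apply Continuous.intervalIntegrable; fun_prop
  · have : (∫ s in (0:ℝ)..1, auxH p (I / J) s) ≤ ∫ s in (0:ℝ)..1, (4 + 1 / J) := by
      apply intervalIntegral.integral_mono_on (by norm_num)
        ((auxH_smooth p _).continuous.intervalIntegrable _ _) (by simp)
      intro s hs
      unfold auxH
      have h2 := auxChi_nonneg s
      have h3 := auxChi_le_one s
      have h4 : I / J ≤ 1 / J := by gcongr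
      have h5 : 0 < I / J := by positivity
      have h6 : auxChi s * s ^ (-p - 1) ≤ 4 := by
        rcases le_or_gt s (1/2) with h | h
        · rw [auxChi_zero h]; norm_num
        · have h7 : s ^ (-p - 1) ≤ s ^ (-2 : ℝ) :=
            Real.rpow_le_rpow_of_exponent_ge (by linarith) hs.2 (by linarith)
          have h8 : s ^ (-2 : ℝ) ≤ (1/2) ^ (-2 : ℝ) :=
            Real.rpow_le_rpow_of_nonpos (by norm_num) h.le (by norm_num)
          have h9 : ((1:ℝ)/2) ^ (-2 : ℝ) = 4 := by
            rw [Real.rpow_neg (by norm_num)]; norm_num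
          have h10 : 0 ≤ s ^ (-p - 1) := Real.rpow_nonneg (by linarith) _
          nlinarith
      nlinarith
    simpa using this

/-- Lemma 2.2: existence of the auxiliary function `φ` used to construct the
modified Hamiltonians. -/
theorem auxiliary_function_exists :
    ∃ θ₀ : ℝ, θ₀ ∈ Set.Ioo (0:ℝ) 1 ∧
      ∀ θ : ℝ, θ ∈ Set.Ioo (0:ℝ) θ₀ →
        ∃ (φ : ℝ → ℝ) (α c : ℝ),
          ContDiff ℝ (⊤ : ℕ∞) φ ∧ α ∈ Set.Ioo (1:ℝ) 2 ∧ c ∈ Set.Ioo (0:ℝ) 1 ∧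
          -- (i)
          φ 0 = 0 ∧ deriv φ 0 = 0 ∧ deriv (deriv φ) 0 = 1 ∧
          Tendsto (fun t => deriv φ t / t) (𝓝[>] (0:ℝ)) (𝓝 1) ∧
          -- (ii)
          (∀ t : ℝ, 0 < t → 0 < φ t) ∧
          (∀ t : ℝ, 0 < t → 0 < deriv φ t) ∧
          StrictAntiOn (fun t => deriv φ t / t) (Set.Ioi (0:ℝ)) ∧
          (∃ L : ℝ, L < θ ∧ Tendsto (fun t => deriv φ t / t) atTop (𝓝 L)) ∧
          -- (iii)
          (∀ t : ℝ, 0 < t → θ ≤ deriv φ t / t → deriv φ t / t ≤ 1 - θ →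
            φ t = c * t ^ α) := by
  refine ⟨1/2, by norm_num, ?_⟩
  intro θ hθ
  obtain ⟨hθ0, hθ1⟩ := hθ
  have hJ := auxJ_pos
  set M := 4 + 1 / ∫ s in (0:ℝ)..1, s ^ 2 * (1 - auxChi s) with hM
  have hM4 : 4 < M := by
    have : 0 < 1 / ∫ s in (0:ℝ)..1, s ^ 2 * (1 - auxChi s) := by positivity
    linarith
  obtain ⟨p, hp⟩ : ∃ p, p = θ / (2 * M) := ⟨_, rfl⟩
  have hp0 : 0 < p := by rw [hp]; positivity
  have hpM : p * M = θ / 2 := by rw [hp]; field_simp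
  have hp1 : p < 1 := by nlinarith
  obtain ⟨r, hr, hB, hH⟩ := aux_core p hp0 hp1
  rw [← hM] at hH
  have hsm := auxH_smooth p r
  have hsm2 : ContDiff ℝ (⊤ : ℕ∞) (fun s => s ^ 2 * auxH p r s) :=
    (contDiff_id.pow 2).mul hsm
  obtain ⟨hd1, hs1⟩ := aux_prim hsm
  obtain ⟨hd2, hs2⟩ := aux_prim hsm2
  have hHpos : 0 < ∫ s in (0:ℝ)..1, auxH p r s :=
    intervalIntegral.intervalIntegral_pos_of_pos_on (hsm.continuous.intervalIntegrable _ _)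
      (fun x hx => auxH_pos hr hx.1) (by norm_num)
  set H := ∫ s in (0:ℝ)..1, auxH p r s with hHd
  obtain ⟨K, hK⟩ : ∃ K, K = 1 / (H + 1 / p) := ⟨_, rfl⟩
  have hK0 : 0 < K := by rw [hK]; positivity
  have hKH : 1 - K * H = K / p := by rw [hK]; field_simp; ring
  obtain ⟨g, hg⟩ : ∃ g : ℝ → ℝ, g = fun t => 1 - K * ∫ s in (0:ℝ)..t, auxH p r s := ⟨_, rfl⟩
  have hgs : ContDiff ℝ (⊤ : ℕ∞) g := by
    rw [hg]; exact contDiff_const.sub (contDiff_const.mul hs1)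
  have hgd : ∀ t, HasDerivAt g (-(K * auxH p r t)) t := by
    intro t; rw [hg]; exact ((hd1 t).const_mul K).const_sub 1
  have hg0 : g 0 = 1 := by rw [hg]; simp
  have hg1 : g 1 = K / p := by rw [hg, ← hKH]
  have hKp1 : K / p < 1 := by rw [← hKH]; nlinarith
  have hKpθ : 1 - θ < K / p := by
    have h1 : K / p * (1 + p * H) = 1 := by rw [hK]; field_simp; ring
    have h2 : p * H ≤ θ / 2 := by rw [← hpM]; gcongr
    have h3 : K / p * (p * H) ≤ p * H := by
      have : 0 < p * H := by positivity
      nlinarith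
    nlinarith
  have hganti : StrictAntiOn g (Ici 0) := by
    apply strictAntiOn_of_deriv_neg (convex_Ici 0) hgs.continuous.continuousOn
    intro x hx
    rw [interior_Ici] at hx
    rw [(hgd x).deriv]
    have := mul_pos hK0 (auxH_pos (p := p) hr hx)
    linarith
  obtain ⟨φ, hφ⟩ : ∃ φ : ℝ → ℝ, φ = fun t => t ^ 2 / 2 * g t +
    K / 2 * ∫ s in (0:ℝ)..t, s ^ 2 * auxH p r s := ⟨_, rfl⟩
  have hφs : ContDiff ℝ (⊤ : ℕ∞) φ := by
    rw [hφ]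
    exact (((contDiff_id.pow 2).div_const 2).mul hgs).add (contDiff_const.mul hs2)
  have hφd : ∀ t, HasDerivAt φ (t * g t) t := by
    intro t; rw [hφ]
    have := ((((hasDerivAt_id t).pow 2).div_const 2).mul (hgd t)).add ((hd2 t).const_mul (K / 2))
    refine this.congr_deriv ?_
    simp
    ring
  have hφ' : deriv φ = fun t => t * g t := funext fun t => (hφd t).deriv
  have hφ0 : φ 0 = 0 := by rw [hφ]; simp
  have hq : ∀ t : ℝ, 0 < t → deriv φ t / t = g t := by
    intro t ht; rw [hφ']; field_simp
  -- generic: constancy on `[1,∞)`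
  have hconst : ∀ u v : ℝ → ℝ, ∀ w : ℝ → ℝ, (∀ t, 1 ≤ t → HasDerivAt u (w t) t) →
      (∀ t, 1 ≤ t → HasDerivAt v (w t) t) → u 1 = v 1 → ∀ t, 1 ≤ t → u t = v t := by
    intro u v w hu hv h1 t ht
    refine eq_of_has_deriv_right_eq (a := 1) (b := t) (f' := w)
      (fun x hx => (hu x hx.1).hasDerivWithinAt) (fun x hx => (hv x hx.1).hasDerivWithinAt)
      (fun x hx => (hu x hx.1).continuousAt.continuousWithinAt)
      (fun x hx => (hv x hx.1).continuousAt.continuousWithinAt) h1 t ⟨ht, le_rfl⟩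
  have hgt : ∀ t, 1 ≤ t → g t = K / p * t ^ (-p) := by
    apply hconst g _ (fun t => -(K * auxH p r t)) (fun t _ => hgd t)
    · intro t ht
      have := (Real.hasDerivAt_rpow_const (x := t) (p := -p) (Or.inl (by linarith))).const_mul (K / p)
      refine this.congr_deriv ?_
      simp only [auxH, auxChi_one ht]
      field_simp
      ring
    · rw [hg1]; simp
  have hφt : ∀ t, 1 ≤ t → φ t = K / (p * (2 - p)) * t ^ (2 - p) := by
    have h2p : 2 - p ≠ 0 := by linarith
    apply hconst φ _ (fun t => t * g t) (fun t _ => hφd t)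
    · intro t ht
      have := (Real.hasDerivAt_rpow_const (x := t) (p := 2 - p)
        (Or.inl (by linarith))).const_mul (K / (p * (2 - p)))
      refine this.congr_deriv ?_
      have e : t ^ (2 - p - 1) = t * t ^ (-p) := by
        nth_rewrite 2 [← Real.rpow_one t]
        rw [← Real.rpow_add (by linarith)]; congr 1; ring
      rw [hgt t ht, e]
      field_simp
    · rw [hφ]
      simp only [hg1, hB]
      rw [Real.one_rpow]
      field_simp
      ring
  have hgpos : ∀ t, 0 < t → 0 < g t := by
    intro t ht
    have h1 : 0 < g (max t 1) := by
      rw [hgt _ (le_max_right _ _)]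
      have : 0 < max t 1 := lt_of_lt_of_le ht (le_max_left _ _)
      positivity
    exact h1.trans_le (hganti.antitoneOn ht.le (ht.le.trans (le_max_left _ _)) (le_max_left _ _))
  have h2p : 0 < 2 - p := by linarith
  refine ⟨φ, 2 - p, K / (p * (2 - p)), hφs, ⟨by linarith, by linarith⟩, ⟨by positivity, ?_⟩, hφ0,
    ?_, ?_, ?_, ?_, ?_, ?_, ⟨0, hθ0, ?_⟩, ?_⟩
  · rw [div_lt_one (by positivity)]
    rw [div_lt_one hp0] at hKp1
    nlinarith
  · rw [hφ']; simp
  · rw [hφ']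
    have h1 : HasDerivAt (fun t => t * g t) (1 * g 0 + 0 * (-(K * auxH p r 0))) 0 :=
      (hasDerivAt_id (0:ℝ)).mul (hgd 0)
    rw [h1.deriv, hg0]; ring
  · have h1 : Tendsto g (𝓝[>] 0) (𝓝 1) := by
      rw [← hg0]; exact hgs.continuous.continuousAt.continuousWithinAt
    refine h1.congr' ?_
    filter_upwards [self_mem_nhdsWithin] with t ht
    exact (hq t ht).symm
  · intro t ht
    have hmono : StrictMonoOn φ (Ici 0) := by
      apply strictMonoOn_of_deriv_pos (convex_Ici 0) hφs.continuous.continuousOn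
      intro x hx
      rw [interior_Ici] at hx
      rw [hφ']
      exact mul_pos hx (hgpos x hx)
    have := hmono (Set.mem_Ici.2 le_rfl) ht.le ht
    rwa [hφ0] at this
  · intro t ht
    rw [hφ']
    exact mul_pos ht (hgpos t ht)
  · intro a ha b hb hab
    simp only [hq a ha, hq b hb]
    exact hganti (mem_Ici.2 (le_of_lt (mem_Ioi.1 ha))) (mem_Ici.2 (le_of_lt (mem_Ioi.1 hb))) hab
  · have h1 : Tendsto (fun t : ℝ => K / p * t ^ (-p)) atTop (𝓝 0) := by
      simpa using (tendsto_rpow_neg_atTop hp0).const_mul (K / p)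
    refine h1.congr' ?_
    filter_upwards [eventually_ge_atTop 1] with t ht
    rw [hq t (by linarith), hgt t ht]
  · intro t ht _ h2
    rw [hq t ht] at h2
    apply hφt
    by_contra hlt
    push Not at hlt
    have := hganti ht.le (show (0:ℝ) ≤ 1 by norm_num) hlt
    rw [hg1] at this
    linarith
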